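/- Let K ⊂ ℂ^n be a compact set, B ⊂ ℂ^n a bounded open set, and Γ ⊆ ℂ^n∖{0} a cone. Set M = sup{ Re⟨z'−z, ζ⟩/|ζ| : z ∈ B, z' ∈ K, ζ ∈ Γ } (finite, since M ≤ sup_{z∈B, z'∈K} |z'−z|). Let ω be a C^∞ function on an open neighborhood of (closure of B)×K in ℂ^n×ℂ^n ≅ ℝ^{4n}, and define F(z,ζ) = ∫_K ω(z,z')·e^{⟨z'−z,ζ⟩} dλ(z'), where λ is Lebesgue measure on ℂ^n ≅ ℝ^{2n}. Then for all multi-indices α,β ∈ ℤ^n_{≥0} and every h > 0 there exists C > 0 such that |∂^α_z ∂^β_{z̄} F(z,ζ)| ≤ C·e^{(M+h)|ζ|} for all (z,ζ) ∈ B×Γ. -/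

import Mathlib

open Complex MeasureTheory

noncomputable section

/-- `ℂ^n`. -/
abbrev Cn (n : ℕ) : Type := Fin n → ℂ

/-- The space `ℂ^n_z × ℂ^n_ζ`. -/
abbrev Pt (n : ℕ) : Type := Cn n × Cn n

/-- The Euclidean norm of `ζ ∈ ℂ^n`. -/
def eucNorm {n : ℕ} (ζ : Cn n) : ℝ := Real.sqrt (∑ i, Complex.normSq (ζ i))

/-- The bilinear pairing `⟨w, ζ⟩ = ∑ᵢ wᵢ ζᵢ`. -/
def cpair {n : ℕ} (w ζ : Cn n) : ℂ := ∑ i, w i * ζ i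

/-- Wirtinger derivative `∂/∂z_i` in the first variable. -/
def dz {n : ℕ} (i : Fin n) (f : Pt n → ℂ) : Pt n → ℂ := fun p =>
  (1 / 2 : ℂ) * (fderiv ℝ f p ((Pi.single i 1 : Cn n), 0)
    - Complex.I * fderiv ℝ f p ((Pi.single i Complex.I : Cn n), 0))

/-- Wirtinger derivative `∂/∂z̄_i` in the first variable. -/
def dzbar {n : ℕ} (i : Fin n) (f : Pt n → ℂ) : Pt n → ℂ := fun p =>
  (1 / 2 : ℂ) * (fderiv ℝ f p ((Pi.single i 1 : Cn n), 0)
    + Complex.I * fderiv ℝ f p ((Pi.single i Complex.I : Cn n), 0))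

/-- The iterated mixed derivative `∂^α_z ∂^β_z̄` in the first variable. -/
def mixedDeriv {n : ℕ} (α β : Fin n → ℕ) (f : Pt n → ℂ) : Pt n → ℂ :=
  ((List.ofFn fun i => (dz i)^[α i]) ++ (List.ofFn fun i => (dzbar i)^[β i])).foldr
    (fun d g => d g) f

/-!
Write `I_ω` for the fiber integral with amplitude `ω`. Differentiating under the integral sign in
a real direction `v` of the `z`-variable gives `∂_v I_ω = I_{∂_v ω} - ⟨v, ζ⟩ I_ω`. Hence the linear
combinations of fiber integrals of smooth amplitudes, with coefficients polynomial in `ζ`, are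
stable under all derivatives in `z` and `z̄`. Each fiber integral is `O(e^{M|ζ|})`, since the
amplitude is bounded on the compact set `closure B × K`, and a factor polynomial in `ζ` costs only
`e^{h|ζ|}` with `h > 0` arbitrarily small.
-/

open Asymptotics Filter Set Topology

section ParametricIntegral

variable {X Y E : Type*}

theorem isOpen_setOf_forall_prodMk_mem [TopologicalSpace X] [TopologicalSpace Y]
    {K : Set Y} {W : Set (X × Y)} (hK : IsCompact K) (hW : IsOpen W) :
    IsOpen {x | ∀ y ∈ K, (x, y) ∈ W} :=
  isOpen_iff_mem_nhds.mpr fun _ hx ↦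
    hK.eventually_forall_of_forall_eventually fun y hy ↦ hW.mem_nhds (hx y hy)

theorem exists_eventually_forall_norm_le [TopologicalSpace X] [TopologicalSpace Y]
    [SeminormedAddCommGroup E] {g : X × Y → E} {x : X} {K : Set Y} (hK : IsCompact K)
    (hg : ∀ y ∈ K, ContinuousAt g (x, y)) :
    ∃ C, ∀ᶠ x' in 𝓝 x, ∀ y ∈ K, ‖g (x', y)‖ ≤ C := by
  have hslice : ContinuousOn (fun y ↦ g (x, y)) K := fun y hy ↦
    ((hg y hy).comp (by fun_prop : ContinuousAt (Prod.mk x) y)).continuousWithinAt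
  obtain ⟨C, hC⟩ := hK.exists_bound_of_continuousOn hslice
  refine ⟨C + 1, hK.eventually_forall_of_forall_eventually fun y hy ↦ ?_⟩
  have hlt : ‖g (x, y)‖ < C + 1 := (hC y hy).trans_lt (lt_add_one C)
  exact ((hg y hy).norm.eventually_lt_const hlt).mono fun _ ↦ le_of_lt

variable [NormedAddCommGroup X] [NormedSpace ℝ X] [NormedAddCommGroup Y] [NormedSpace ℝ Y]
  [NormedAddCommGroup E] [NormedSpace ℝ E] {K : Set Y} {W : Set (X × Y)} {G : X × Y → E} {x : X}

theorem continuousOn_fderiv_comp_inl (hW : IsOpen W) (hG : ContDiffOn ℝ 1 G W) :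
    ContinuousOn (fun p ↦ fderiv ℝ G p ∘L .inl ℝ X Y) W :=
  (hG.continuousOn_fderiv_of_isOpen hW le_rfl).clm_comp continuousOn_const

theorem fderiv_comp_snd_apply_inl {g : Y → E} {p : X × Y} (hg : DifferentiableAt ℝ g p.2) (v : X) :
    fderiv ℝ (fun p : X × Y ↦ g p.2) p (v, 0) = 0 := by
  have hcomp : HasFDerivAt (fun p : X × Y ↦ g p.2) (fderiv ℝ g p.2 ∘L .snd ℝ X Y) p :=
    hg.hasFDerivAt.comp p hasFDerivAt_snd
  simp [hcomp.fderiv]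

variable [MeasurableSpace Y] [OpensMeasurableSpace Y] {μ : Measure Y} [IsFiniteMeasureOnCompacts μ]

theorem hasFDerivAt_setIntegral_of_contDiffOn (hK : IsCompact K) (hW : IsOpen W)
    (hG : ContDiffOn ℝ 1 G W) (hx : ∀ y ∈ K, (x, y) ∈ W) :
    HasFDerivAt (fun x ↦ ∫ y in K, G (x, y) ∂μ)
      (∫ y in K, fderiv ℝ G (x, y) ∘L .inl ℝ X Y ∂μ) x := by
  have hG' := continuousOn_fderiv_comp_inl hW hG
  have hnear : ∀ᶠ x' in 𝓝 x, ∀ y ∈ K, (x', y) ∈ W :=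
    (isOpen_setOf_forall_prodMk_mem hK hW).mem_nhds hx
  have hslice {x' : X} (hx' : ∀ y ∈ K, (x', y) ∈ W) : ContinuousOn (fun y ↦ G (x', y)) K :=
    hG.continuousOn.comp (by fun_prop) hx'
  have hslice' : ContinuousOn (fun y ↦ fderiv ℝ G (x, y) ∘L .inl ℝ X Y) K :=
    hG'.comp (f := Prod.mk x) (by fun_prop) hx
  obtain ⟨C, hC⟩ := exists_eventually_forall_norm_le hK fun y hy ↦
    hG'.continuousAt (hW.mem_nhds (hx y hy))
  refine hasFDerivAt_integral_of_dominated_of_fderiv_le (bound := fun _ ↦ C)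
    (F' := fun x' y ↦ fderiv ℝ G (x', y) ∘L .inl ℝ X Y) (hnear.and hC) ?_
    ((hslice hx).integrableOn_compact hK)
    (hslice'.aestronglyMeasurable_of_isCompact hK hK.measurableSet) ?_
    (integrableOn_const hK.measure_ne_top) ?_
  · filter_upwards [hnear] with x' hx'
    exact (hslice hx').aestronglyMeasurable_of_isCompact hK hK.measurableSet
  · filter_upwards [ae_restrict_mem hK.measurableSet] with y hy x' hx'
    exact hx'.2 y hy
  · filter_upwards [ae_restrict_mem hK.measurableSet] with y hy x' hx'
    have hdiff : DifferentiableAt ℝ G (x', y) :=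
      (hG.differentiableOn one_ne_zero).differentiableAt (hW.mem_nhds (hx'.1 y hy))
    exact hdiff.hasFDerivAt.comp x' (hasFDerivAt_prodMk_left x' y)

theorem fderiv_setIntegral_apply_of_contDiffOn (hK : IsCompact K)
    (hW : IsOpen W) (hG : ContDiffOn ℝ 1 G W) (hx : ∀ y ∈ K, (x, y) ∈ W) (v : X) :
    fderiv ℝ (fun x ↦ ∫ y in K, G (x, y) ∂μ) x v = ∫ y in K, fderiv ℝ G (x, y) (v, 0) ∂μ := by
  have hslice' : ContinuousOn (fun y ↦ fderiv ℝ G (x, y) ∘L .inl ℝ X Y) K :=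
    (continuousOn_fderiv_comp_inl hW hG).comp (f := Prod.mk x) (by fun_prop) hx
  rw [(hasFDerivAt_setIntegral_of_contDiffOn hK hW hG hx).fderiv,
    ContinuousLinearMap.integral_apply (hslice'.integrableOn_compact hK)]
  rfl

end ParametricIntegral

section Pairing

variable {n : ℕ}

theorem cpair_eq_dotProduct (w ζ : Cn n) : cpair w ζ = w ⬝ᵥ ζ := rfl

theorem eucNorm_nonneg (ζ : Cn n) : 0 ≤ eucNorm ζ := Real.sqrt_nonneg _

theorem continuous_eucNorm : Continuous (eucNorm : Cn n → ℝ) := by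
  unfold eucNorm
  fun_prop

theorem norm_cpair_le (w ζ : Cn n) : ‖cpair w ζ‖ ≤ eucNorm w * eucNorm ζ := by
  simp only [eucNorm, Complex.normSq_eq_norm_sq]
  calc ‖∑ i, w i * ζ i‖ ≤ ∑ i, ‖w i‖ * ‖ζ i‖ := by
        simpa only [norm_mul] using norm_sum_le Finset.univ fun i ↦ w i * ζ i
    _ ≤ √(∑ i, ‖w i‖ ^ 2) * √(∑ i, ‖ζ i‖ ^ 2) := Real.sum_mul_le_sqrt_mul_sqrt _ _ _

theorem contDiff_cpair {X : Type*} [NormedAddCommGroup X] [NormedSpace ℝ X] {k : WithTop ℕ∞}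
    {a b : X → Cn n} (ha : ContDiff ℝ k a) (hb : ContDiff ℝ k b) :
    ContDiff ℝ k fun x ↦ cpair (a x) (b x) :=
  ContDiff.sum fun i _ ↦ (contDiff_pi.mp ha i).mul (contDiff_pi.mp hb i)

theorem differentiableAt_cpair_right (w ζ : Cn n) : DifferentiableAt ℝ (cpair w) ζ :=
  (contDiff_cpair (k := 1) contDiff_const contDiff_id).differentiable one_ne_zero ζ

/-- The quotients `Re⟨z' - z, ζ⟩ / |ζ|` with `z ∈ B`, `z' ∈ K`, `ζ ∈ Γ`, whose supremum is the
exponential type `M` of the fiber integral. -/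
def exponentialTypes (K B Γ : Set (Cn n)) : Set ℝ :=
  {x : ℝ | ∃ z ∈ B, ∃ z' ∈ K, ∃ ζ ∈ Γ, x = (cpair (z' - z) ζ).re / eucNorm ζ}

variable {K B Γ : Set (Cn n)}

theorem bddAbove_exponentialTypes (hK : Bornology.IsBounded K) (hB : Bornology.IsBounded B) :
    BddAbove (exponentialTypes K B Γ) := by
  obtain ⟨R, hR⟩ := (hB.isCompact_closure.prod hK.isCompact_closure).bddAbove_image
    (continuous_eucNorm.comp (continuous_snd.sub continuous_fst)).continuousOn
  have hRle {z z' : Cn n} (hz : z ∈ B) (hz' : z' ∈ K) : eucNorm (z' - z) ≤ R :=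
    hR ⟨(z, z'), ⟨subset_closure hz, subset_closure hz'⟩, rfl⟩
  refine ⟨R, ?_⟩
  rintro _ ⟨z, hz, z', hz', ζ, -, rfl⟩
  refine div_le_of_le_mul₀ (eucNorm_nonneg ζ) ((eucNorm_nonneg _).trans (hRle hz hz')) ?_
  calc (cpair (z' - z) ζ).re ≤ ‖cpair (z' - z) ζ‖ := Complex.re_le_norm _
    _ ≤ eucNorm (z' - z) * eucNorm ζ := norm_cpair_le _ _
    _ ≤ R * eucNorm ζ := by gcongr; exacts [eucNorm_nonneg ζ, hRle hz hz']

theorem re_cpair_sub_le_sSup_mul (hK : Bornology.IsBounded K) (hB : Bornology.IsBounded B)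
    {z z' ζ : Cn n} (hz : z ∈ B) (hz' : z' ∈ K) (hζ : ζ ∈ Γ) :
    (cpair (z' - z) ζ).re ≤ sSup (exponentialTypes K B Γ) * eucNorm ζ := by
  rcases (eucNorm_nonneg ζ).eq_or_lt with hzero | hpos
  · have hle := (Complex.re_le_norm _).trans (norm_cpair_le (z' - z) ζ)
    rwa [← hzero, mul_zero] at hle ⊢
  · rw [← div_le_iff₀ hpos]
    exact le_csSup (bddAbove_exponentialTypes hK hB) ⟨z, hz, z', hz', ζ, hζ, rfl⟩

end Pairing

section Growth

variable {n : ℕ}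

/-- Infra-exponential growth of type `M` on `S ⊆ ℂ^n_z × ℂ^n_ζ`: the function is
`O(e^{(M+h)|ζ|})` uniformly on `S`, for every `h > 0`. -/
def HasInfraExpGrowth (S : Set (Pt n)) (M : ℝ) (f : Pt n → ℂ) : Prop :=
  ∀ h > 0, f =O[𝓟 S] fun x ↦ Real.exp ((M + h) * eucNorm x.2)

variable {S : Set (Pt n)} {M : ℝ} {f g : Pt n → ℂ}

theorem eucNorm_snd_isBigO_exp (S : Set (Pt n)) {h : ℝ} (hh : 0 < h) :
    (fun x : Pt n ↦ eucNorm x.2) =O[𝓟 S] fun x ↦ Real.exp (h * eucNorm x.2) := by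
  refine isBigO_principal.mpr ⟨h⁻¹, fun x _ ↦ ?_⟩
  rw [Real.norm_of_nonneg (eucNorm_nonneg _), Real.norm_of_nonneg (Real.exp_pos _).le,
    le_inv_mul_iff₀ hh]
  linarith [Real.add_one_le_exp (h * eucNorm x.2)]

namespace HasInfraExpGrowth

theorem add (hf : HasInfraExpGrowth S M f) (hg : HasInfraExpGrowth S M g) :
    HasInfraExpGrowth S M fun x ↦ f x + g x :=
  fun h hh ↦ (hf h hh).add (hg h hh)

theorem const_mul (c : ℂ) (hf : HasInfraExpGrowth S M f) : HasInfraExpGrowth S M fun x ↦ c * f x :=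
  fun h hh ↦ (hf h hh).const_mul_left c

theorem congr (hf : HasInfraExpGrowth S M f) (hfg : EqOn g f S) : HasInfraExpGrowth S M g :=
  fun h hh ↦ (hf h hh).congr' (eventuallyEq_principal.mpr hfg.symm) .rfl

theorem cpair_mul (w : Cn n) (hf : HasInfraExpGrowth S M f) :
    HasInfraExpGrowth S M fun x ↦ cpair w x.2 * f x := by
  intro h hh
  have hpair : (fun x : Pt n ↦ cpair w x.2) =O[𝓟 S] fun x ↦ eucNorm x.2 :=
    isBigO_principal.mpr ⟨eucNorm w, fun x _ ↦ by
      simpa only [Real.norm_of_nonneg (eucNorm_nonneg _)] using norm_cpair_le w x.2⟩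
  refine ((hpair.trans (eucNorm_snd_isBigO_exp S (half_pos hh))).mul
    (hf (h / 2) (half_pos hh))).congr_right fun x ↦ ?_
  rw [← Real.exp_add]
  ring_nf

end HasInfraExpGrowth

end Growth

section FiberIntegral

variable {n : ℕ}

/-- The integrand `ω(z, z') e^{⟨z' - z, ζ⟩}` of the fiber integral, as a function of
`((z, ζ), z')`. -/
def fiberIntegrand (ω : Pt n → ℂ) (y : Pt n × Cn n) : ℂ :=
  ω (y.1.1, y.2) * Complex.exp (cpair (y.2 - y.1.1) y.1.2)

/-- The fiber integral `(z, ζ) ↦ ∫_K ω(z, z') e^{⟨z' - z, ζ⟩} dμ(z')` with amplitude `ω`. -/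
def fiberIntegral (μ : Measure (Cn n)) (K : Set (Cn n)) (ω : Pt n → ℂ) (x : Pt n) : ℂ :=
  ∫ z' in K, fiberIntegrand ω (x, z') ∂μ

/-- The points `(z, ζ)` for which the fiber `{z} × K` lies in the domain `O` of the amplitude. -/
def fiberDomain (K : Set (Cn n)) (O : Set (Pt n)) : Set (Pt n) :=
  {x | ∀ z' ∈ K, (x.1, z') ∈ O}

variable {μ : Measure (Cn n)} {K B Γ : Set (Cn n)} {O : Set (Pt n)} {ω : Pt n → ℂ} {x : Pt n}
  {M : ℝ}

theorem isOpen_fiberDomain (hK : IsCompact K) (hO : IsOpen O) : IsOpen (fiberDomain K O) :=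
  (isOpen_setOf_forall_prodMk_mem hK hO).preimage continuous_fst

theorem contDiff_cpair_sub {k : WithTop ℕ∞} :
    ContDiff ℝ k fun y : Pt n × Cn n ↦ cpair (y.2 - y.1.1) y.1.2 :=
  contDiff_cpair (by fun_prop) (by fun_prop)

theorem differentiable_cpair_sub :
    Differentiable ℝ fun y : Pt n × Cn n ↦ cpair (y.2 - y.1.1) y.1.2 :=
  contDiff_cpair_sub.differentiable one_ne_zero

theorem contDiffOn_fiberIntegrand {k : WithTop ℕ∞} (hω : ContDiffOn ℝ k ω O) :
    ContDiffOn ℝ k (fiberIntegrand ω) {y : Pt n × Cn n | (y.1.1, y.2) ∈ O} := by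
  have hamplitude : ContDiffOn ℝ k (fun y : Pt n × Cn n ↦ ω (y.1.1, y.2)) {y | (y.1.1, y.2) ∈ O} :=
    hω.comp (f := fun y : Pt n × Cn n ↦ (y.1.1, y.2)) (by fun_prop) fun _ hy ↦ hy
  exact hamplitude.mul contDiff_cpair_sub.cexp.contDiffOn

theorem fderiv_cpair_sub_apply (y : Pt n × Cn n) (v : Cn n) :
    fderiv ℝ (fun y : Pt n × Cn n ↦ cpair (y.2 - y.1.1) y.1.2) y ((v, 0), 0) =
      cpair (-v) y.1.2 := by
  rw [← (differentiable_cpair_sub y).lineDeriv_eq_fderiv]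
  refine HasLineDerivAt.lineDeriv ?_
  have haffine (t : ℝ) : cpair (y.2 - (y.1.1 + t • v)) y.1.2 =
      cpair (y.2 - y.1.1) y.1.2 + t • cpair (-v) y.1.2 := by
    simp only [cpair_eq_dotProduct, ← sub_sub, sub_dotProduct, neg_dotProduct, smul_dotProduct,
      smul_neg, ← sub_eq_add_neg]
  simpa [HasLineDerivAt, haffine] using
    ((hasDerivAt_id (0 : ℝ)).smul_const (cpair (-v) y.1.2)).const_add (cpair (y.2 - y.1.1) y.1.2)

theorem fderiv_fiberIntegrand_apply {y : Pt n × Cn n} (hω : DifferentiableAt ℝ ω (y.1.1, y.2))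
    (v : Cn n) :
    fderiv ℝ (fiberIntegrand ω) y ((v, 0), 0) =
      fiberIntegrand (fun p ↦ fderiv ℝ ω p (v, 0)) y + cpair (-v) y.1.2 * fiberIntegrand ω y := by
  have hamplitude : HasFDerivAt (fun y : Pt n × Cn n ↦ ω (y.1.1, y.2)) _ y :=
    hω.hasFDerivAt.comp (f := fun y : Pt n × Cn n ↦ (y.1.1, y.2)) y
      (hasFDerivAt_fst.fst.prodMk hasFDerivAt_snd)
  have hphase := (differentiable_cpair_sub y).hasFDerivAt.cexp
  have hprod : HasFDerivAt (fiberIntegrand ω) _ y := hamplitude.mul hphase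
  rw [hprod.fderiv]
  simp only [add_apply, smul_apply, fderiv_cpair_sub_apply, smul_eq_mul,
    ContinuousLinearMap.comp_apply, ContinuousLinearMap.prod_apply, ContinuousLinearMap.coe_fst',
    ContinuousLinearMap.coe_snd', fiberIntegrand]
  ring

variable [IsFiniteMeasureOnCompacts μ]

theorem integrableOn_fiberIntegrand (hK : IsCompact K) (hω : ContinuousOn ω O)
    (hx : x ∈ fiberDomain K O) : IntegrableOn (fun z' ↦ fiberIntegrand ω (x, z')) K μ := by
  have hcont : ContinuousOn (fun z' ↦ fiberIntegrand ω (x, z')) K :=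
    (contDiffOn_fiberIntegrand (contDiffOn_zero.mpr hω)).continuousOn.comp
      (f := Prod.mk x) (by fun_prop) hx
  exact hcont.integrableOn_compact hK

theorem differentiableAt_fiberIntegral (hK : IsCompact K) (hO : IsOpen O)
    (hω : ContDiffOn ℝ 1 ω O) (hx : x ∈ fiberDomain K O) :
    DifferentiableAt ℝ (fiberIntegral μ K ω) x :=
  (hasFDerivAt_setIntegral_of_contDiffOn hK (hO.preimage (by fun_prop))
    (contDiffOn_fiberIntegrand hω) hx).differentiableAt

theorem fderiv_fiberIntegral_apply (hK : IsCompact K) (hO : IsOpen O)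
    (hω : ContDiffOn ℝ 1 ω O) (hx : x ∈ fiberDomain K O) (v : Cn n) :
    fderiv ℝ (fiberIntegral μ K ω) x (v, 0) =
      fiberIntegral μ K (fun p ↦ fderiv ℝ ω p (v, 0)) x +
        cpair (-v) x.2 * fiberIntegral μ K ω x := by
  have hω' : ContinuousOn (fun p ↦ fderiv ℝ ω p (v, 0)) O :=
    (hω.continuousOn_fderiv_of_isOpen hO le_rfl).clm_apply continuousOn_const
  calc fderiv ℝ (fiberIntegral μ K ω) x (v, 0)
      = ∫ z' in K, fderiv ℝ (fiberIntegrand ω) (x, z') ((v, 0), 0) ∂μ :=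
        fderiv_setIntegral_apply_of_contDiffOn hK (hO.preimage (by fun_prop))
          (contDiffOn_fiberIntegrand hω) hx (v, 0)
    _ = ∫ z' in K, (fiberIntegrand (fun p ↦ fderiv ℝ ω p (v, 0)) (x, z') +
          cpair (-v) x.2 * fiberIntegrand ω (x, z')) ∂μ :=
        setIntegral_congr_fun hK.measurableSet fun z' hz' ↦ fderiv_fiberIntegrand_apply
          ((hω.differentiableOn one_ne_zero).differentiableAt (hO.mem_nhds (hx z' hz'))) v
    _ = _ := by
        rw [integral_add (integrableOn_fiberIntegrand hK hω' hx)
          ((integrableOn_fiberIntegrand hK hω.continuousOn hx).const_mul _), integral_const_mul]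
        rfl

theorem hasInfraExpGrowth_fiberIntegral (hK : IsCompact K) (hB : Bornology.IsBounded B)
    (hM : ∀ z ∈ B, ∀ z' ∈ K, ∀ ζ ∈ Γ, (cpair (z' - z) ζ).re ≤ M * eucNorm ζ)
    (hω : ContinuousOn ω (closure B ×ˢ K)) :
    HasInfraExpGrowth (B ×ˢ Γ) M (fiberIntegral μ K ω) := by
  intro h hh
  obtain ⟨C, hC⟩ := (hB.isCompact_closure.prod hK).exists_bound_of_continuousOn hω
  refine isBigO_principal.mpr ⟨C * μ.real K, ?_⟩
  rintro ⟨z, ζ⟩ ⟨hz, hζ⟩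
  have hintegrand : ∀ z' ∈ K,
      ‖fiberIntegrand ω ((z, ζ), z')‖ ≤ C * Real.exp ((M + h) * eucNorm ζ) := fun z' hz' ↦ by
    have hamplitude : ‖ω (z, z')‖ ≤ C := hC (z, z') ⟨subset_closure hz, hz'⟩
    have hphase : (cpair (z' - z) ζ).re ≤ (M + h) * eucNorm ζ :=
      (hM z hz z' hz' ζ hζ).trans (by gcongr; exacts [eucNorm_nonneg ζ, by linarith])
    rw [fiberIntegrand, norm_mul, Complex.norm_exp]
    gcongr
    exact (norm_nonneg _).trans hamplitude
  rw [Real.norm_of_nonneg (Real.exp_pos _).le, mul_right_comm]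
  exact norm_setIntegral_le_of_norm_le_const hK.measure_lt_top hintegrand

end FiberIntegral

section FiberSymbol

variable {n : ℕ}

/-- The combinations of fiber integrals of amplitudes smooth on `O`, with coefficients polynomial
in `ζ`. Functions are identified when they agree on the open set `fiberDomain K O`, the only place
where the derivatives of a fiber integral are under control. -/
inductive IsFiberSymbol (μ : Measure (Cn n)) (K : Set (Cn n)) (O : Set (Pt n)) :
    (Pt n → ℂ) → Prop
  | fiberIntegral {ω : Pt n → ℂ} (hω : ContDiffOn ℝ (⊤ : ℕ∞) ω O) :
      IsFiberSymbol μ K O (fiberIntegral μ K ω)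
  | add {f g : Pt n → ℂ} (hf : IsFiberSymbol μ K O f) (hg : IsFiberSymbol μ K O g) :
      IsFiberSymbol μ K O fun x ↦ f x + g x
  | const_mul {f : Pt n → ℂ} (c : ℂ) (hf : IsFiberSymbol μ K O f) :
      IsFiberSymbol μ K O fun x ↦ c * f x
  | cpair_mul {f : Pt n → ℂ} (w : Cn n) (hf : IsFiberSymbol μ K O f) :
      IsFiberSymbol μ K O fun x ↦ cpair w x.2 * f x
  | congr {f g : Pt n → ℂ} (hf : IsFiberSymbol μ K O f) (hfg : EqOn g f (fiberDomain K O)) :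
      IsFiberSymbol μ K O g

theorem mixedDeriv_induction {P : (Pt n → ℂ) → Prop} (hdz : ∀ i f, P f → P (dz i f))
    (hdzbar : ∀ i f, P f → P (dzbar i f)) (α β : Fin n → ℕ) {f : Pt n → ℂ} (hf : P f) :
    P (mixedDeriv α β f) := by
  refine List.foldrRecOn _ _ hf fun g hg d hd ↦ ?_
  rcases List.mem_append.mp hd with hd | hd <;> obtain ⟨i, rfl⟩ := List.mem_ofFn.mp hd
  · exact Function.Iterate.rec P hg (hdz i) (α i)
  · exact Function.Iterate.rec P hg (hdzbar i) (β i)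

namespace IsFiberSymbol

variable {μ : Measure (Cn n)} [IsFiniteMeasureOnCompacts μ] {K B Γ : Set (Cn n)}
  {O : Set (Pt n)} {M : ℝ} {f : Pt n → ℂ}

theorem differentiableAt (hf : IsFiberSymbol μ K O f) (hK : IsCompact K) (hO : IsOpen O)
    {x : Pt n} (hx : x ∈ fiberDomain K O) : DifferentiableAt ℝ f x := by
  induction hf with
  | fiberIntegral hω =>
    exact differentiableAt_fiberIntegral hK hO (hω.of_le (by simp)) hx
  | add _ _ hf hg => exact hf.add hg
  | const_mul c _ hf => exact hf.const_mul c
  | cpair_mul w _ hf =>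
    exact ((differentiableAt_cpair_right w x.2).comp x differentiableAt_snd).mul hf
  | congr _ hfg hf =>
    have hnear := hfg.eventuallyEq_of_mem ((isOpen_fiberDomain hK hO).mem_nhds hx)
    exact hf.congr_of_eventuallyEq hnear

theorem fderiv_apply (hf : IsFiberSymbol μ K O f) (hK : IsCompact K) (hO : IsOpen O) (v : Cn n) :
    IsFiberSymbol μ K O fun x ↦ fderiv ℝ f x (v, 0) := by
  induction hf with
  | fiberIntegral hω =>
    have hω' := (hω.fderiv_of_isOpen hO (m := (⊤ : ℕ∞)) le_rfl).clm_apply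
      (contDiffOn_const (c := ((v, 0) : Pt n)))
    exact ((fiberIntegral hω').add ((fiberIntegral hω).cpair_mul (-v))).congr fun x hx ↦
      fderiv_fiberIntegral_apply hK hO (hω.of_le (by simp)) hx v
  | add hf hg hf' hg' =>
    refine (hf'.add hg').congr fun x hx ↦ ?_
    simp [fderiv_fun_add (hf.differentiableAt hK hO hx) (hg.differentiableAt hK hO hx)]
  | const_mul c hf hf' =>
    refine (hf'.const_mul c).congr fun x hx ↦ ?_
    simp [fderiv_const_mul (hf.differentiableAt hK hO hx)]
  | cpair_mul w hf hf' =>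
    refine (hf'.cpair_mul w).congr fun x hx ↦ ?_
    have hw := differentiableAt_cpair_right w x.2
    have hw' : DifferentiableAt ℝ (fun x : Pt n ↦ cpair w x.2) x := hw.comp x differentiableAt_snd
    simp [fderiv_fun_mul hw' (hf.differentiableAt hK hO hx), fderiv_comp_snd_apply_inl hw]
  | congr _ hfg hf' =>
    refine hf'.congr fun x hx ↦ ?_
    have hnear := hfg.eventuallyEq_of_mem ((isOpen_fiberDomain hK hO).mem_nhds hx)
    simp only [hnear.fderiv_eq]

theorem dz (hf : IsFiberSymbol μ K O f) (hK : IsCompact K) (hO : IsOpen O) (i : Fin n) :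
    IsFiberSymbol μ K O (dz i f) := by
  have hcomb := ((hf.fderiv_apply hK hO (Pi.single i 1)).add
    ((hf.fderiv_apply hK hO (Pi.single i Complex.I)).const_mul (-Complex.I))).const_mul (1 / 2)
  simp only [neg_mul, ← sub_eq_add_neg] at hcomb
  exact hcomb

theorem dzbar (hf : IsFiberSymbol μ K O f) (hK : IsCompact K) (hO : IsOpen O) (i : Fin n) :
    IsFiberSymbol μ K O (dzbar i f) :=
  ((hf.fderiv_apply hK hO (Pi.single i 1)).add
    ((hf.fderiv_apply hK hO (Pi.single i Complex.I)).const_mul Complex.I)).const_mul (1 / 2)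

theorem mixedDeriv (hf : IsFiberSymbol μ K O f) (hK : IsCompact K) (hO : IsOpen O)
    (α β : Fin n → ℕ) : IsFiberSymbol μ K O (mixedDeriv α β f) :=
  mixedDeriv_induction (fun i _ hg ↦ hg.dz hK hO i) (fun i _ hg ↦ hg.dzbar hK hO i) α β hf

theorem hasInfraExpGrowth (hf : IsFiberSymbol μ K O f) (hK : IsCompact K)
    (hB : Bornology.IsBounded B) (hBK : closure B ×ˢ K ⊆ O)
    (hM : ∀ z ∈ B, ∀ z' ∈ K, ∀ ζ ∈ Γ, (cpair (z' - z) ζ).re ≤ M * eucNorm ζ) :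
    HasInfraExpGrowth (B ×ˢ Γ) M f := by
  have hdomain : B ×ˢ Γ ⊆ fiberDomain K O := fun x hx z' hz' ↦ hBK ⟨subset_closure hx.1, hz'⟩
  induction hf with
  | fiberIntegral hω => exact hasInfraExpGrowth_fiberIntegral hK hB hM (hω.continuousOn.mono hBK)
  | add _ _ hf hg => exact hf.add hg
  | const_mul c _ hf => exact hf.const_mul c
  | cpair_mul w _ hf => exact hf.cpair_mul w
  | congr _ hfg hf => exact hf.congr (hfg.mono hdomain)

end IsFiberSymbol

end FiberSymbol

theorem fiber_integral_growth_general {n : ℕ} {μ : Measure (Cn n)} [IsFiniteMeasureOnCompacts μ]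
    {K B Γ : Set (Cn n)} (hK : IsCompact K) (hB : Bornology.IsBounded B) {M : ℝ}
    (hM : ∀ z ∈ B, ∀ z' ∈ K, ∀ ζ ∈ Γ, (cpair (z' - z) ζ).re ≤ M * eucNorm ζ)
    {ω : Pt n → ℂ} {O : Set (Pt n)} (hO : IsOpen O) (hBK : closure B ×ˢ K ⊆ O)
    (hω : ContDiffOn ℝ (⊤ : ℕ∞) ω O) (α β : Fin n → ℕ) (h : ℝ) (hh : 0 < h) :
    ∃ C : ℝ, 0 < C ∧ ∀ z ∈ B, ∀ ζ ∈ Γ,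
      ‖mixedDeriv α β (fiberIntegral μ K ω) (z, ζ)‖ ≤ C * Real.exp ((M + h) * eucNorm ζ) := by
  have hsymbol : IsFiberSymbol μ K O (mixedDeriv α β (fiberIntegral μ K ω)) :=
    (IsFiberSymbol.fiberIntegral hω).mixedDeriv hK hO α β
  obtain ⟨C, hC, hbound⟩ := (hsymbol.hasInfraExpGrowth hK hB hBK hM h hh).exists_pos
  refine ⟨C, hC, fun z hz ζ hζ ↦ ?_⟩
  simpa only [Real.norm_of_nonneg (Real.exp_pos _).le] using
    isBigOWith_principal.mp hbound (z, ζ) ⟨hz, hζ⟩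

/-- (Infra-exponential growth of the fiber integrals of the symbol
map.) With `M = sup { Re⟨z' − z, ζ⟩/|ζ| : z ∈ B, z' ∈ K, ζ ∈ Γ }`, all mixed
`(z, z̄)`-derivatives of `F(z, ζ) = ∫_K ω(z, z') e^{⟨z'−z, ζ⟩} dλ(z')` are bounded by
`C·e^{(M+h)|ζ|}` on `B × Γ`, for every `h > 0`. -/
theorem fiber_integral_growth {n : ℕ}
    (K : Set (Cn n)) (hK : IsCompact K)
    (B : Set (Cn n)) (hBopen : IsOpen B) (hBbdd : Bornology.IsBounded B)
    (Γ : Set (Cn n)) (hΓ0 : (0 : Cn n) ∉ Γ)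
    (hΓcone : ∀ ζ ∈ Γ, ∀ t : ℝ, 0 < t → t • ζ ∈ Γ)
    (M : ℝ)
    (hM : M = sSup {x : ℝ | ∃ z ∈ B, ∃ z' ∈ K, ∃ ζ ∈ Γ,
      x = (cpair (z' - z) ζ).re / eucNorm ζ})
    (ω : Pt n → ℂ) (O : Set (Pt n)) (hOopen : IsOpen O)
    (hOsub : (closure B) ×ˢ K ⊆ O) (hω : ContDiffOn ℝ (⊤ : ℕ∞) ω O)
    (F : Pt n → ℂ)
    (hF : ∀ x : Pt n,
      F x = ∫ z' in K, ω (x.1, z') * Complex.exp (cpair (z' - x.1) x.2)) :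
    ∀ α β : Fin n → ℕ, ∀ h : ℝ, 0 < h → ∃ C : ℝ, 0 < C ∧
      ∀ z ∈ B, ∀ ζ ∈ Γ,
        ‖mixedDeriv α β F (z, ζ)‖ ≤ C * Real.exp ((M + h) * eucNorm ζ) := by
  obtain rfl : F = fiberIntegral volume K ω := funext hF
  exact fiber_integral_growth_general hK hBbdd (fun z hz z' hz' ζ hζ ↦
    hM ▸ re_cpair_sub_le_sSup_mul hK.isBounded hBbdd hz hz' hζ) hOopen hOsub hω
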